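/- Let M be a finitely generated submonoid of ℕⁿ. Call a subset T ⊆ M a monomial ideal of M if t ∈ T and m ∈ M imply t + m ∈ T. Then in any infinite collection 𝓣 of monomial ideals of M there are two distinct members T₁, T₂ ∈ 𝓣 with T₁ ⊆ T₂. -/

import Mathlib

/-!
A finitely generated commutative monoid is a quotient of some `ℕᵈ`, and pulling back along the
quotient map embeds its ideals into the upper sets of `ℕᵈ`. Those are well quasi-ordered by reverse
inclusion, by induction on `d`: slicing along the first coordinate turns an upper set of `ℕᵈ⁺¹` into
an antitone sequence of upper sets of `ℕᵈ`. An antitone sequence in a well quasi-order attains a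
least value, so it is encoded by a finite list together with that value, and Higman's lemma applies
to the lists.
-/

theorem wellQuasiOrdered_of_reflects {α β : Type*} {r : α → α → Prop} {s : β → β → Prop}
    (hs : WellQuasiOrdered s) (f : α → β) (hf : ∀ a b, s (f a) (f b) → r a b) :
    WellQuasiOrdered r := fun u ↦
  let ⟨i, j, hij, h⟩ := hs (f ∘ u)
  ⟨i, j, hij, hf _ _ h⟩

theorem wellQuasiOrdered_sublistForall₂ {α : Type*} {r : α → α → Prop} [IsPreorder α r]
    (hr : WellQuasiOrdered r) : WellQuasiOrdered (List.SublistForall₂ r) := by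
  have higman := Set.PartiallyWellOrderedOn.partiallyWellOrderedOn_sublistForall₂ r
    (Set.partiallyWellOrderedOn_univ_iff.2 hr)
  simpa only [Set.mem_univ, implies_true, Set.ofPred_true, Set.partiallyWellOrderedOn_univ_iff]
    using higman

section AntitoneSequences

variable {Q : Type*} [Preorder Q]

theorem getElem_le_getElem_of_sublistForall₂ {l₁ l₂ : List Q} (h : l₁.SublistForall₂ (· ≤ ·) l₂)
    (hl₂ : l₂.SortedGE) (i : ℕ) (hi₁ : i < l₁.length) : ∃ hi₂ : i < l₂.length, l₁[i] ≤ l₂[i] := by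
  induction h generalizing i with
  | nil => simp at hi₁
  | cons hab _ ih =>
    cases i with
    | zero => exact ⟨Nat.zero_lt_succ _, hab⟩
    | succ i => simpa using ih hl₂.pairwise.of_cons.sortedGE i (by simpa using hi₁)
  | @cons_right b l₁ l₂ _ ih =>
    obtain ⟨hi₂, hle⟩ := ih hl₂.pairwise.of_cons.sortedGE i hi₁
    have hshift : l₂[i] ≤ (b :: l₂)[i]'(Nat.lt_succ_of_lt hi₂) :=
      hl₂.getElem_ge_getElem_of_le (hi := Nat.succ_lt_succ hi₂) i.le_succ
    exact ⟨Nat.lt_succ_of_lt hi₂, hle.trans hshift⟩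

theorem exists_forall_apply_le_of_antitone {α : Type*} [Preorder α] [IsDirectedOrder α]
    [Nonempty α] [WellFoundedLT Q] {f : α → Q} (hf : Antitone f) : ∃ a, ∀ b, f a ≤ f b := by
  obtain ⟨a, -, hmin⟩ := exists_minimalFor_of_wellFoundedLT (fun _ ↦ True) f (by simp)
  refine ⟨a, fun b ↦ ?_⟩
  obtain ⟨c, hac, hbc⟩ := exists_ge_ge a b
  exact (hmin trivial (hf hac)).trans (hf hbc)

theorem wellQuasiOrderedLE_antitone_nat [WellQuasiOrderedLE Q] :
    WellQuasiOrderedLE {f : ℕ → Q // Antitone f} := by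
  choose N hN using fun f : {f : ℕ → Q // Antitone f} ↦ exists_forall_apply_le_of_antitone f.2
  have : IsPreorder (List Q) (List.SublistForall₂ (· ≤ ·)) := {}
  have hwqo : WellQuasiOrdered ((· ≤ ·) : Q → Q → Prop) := wellQuasiOrdered_le
  refine ⟨wellQuasiOrdered_of_reflects ((wellQuasiOrdered_sublistForall₂ hwqo).prod hwqo)
    (fun f ↦ (List.ofFn fun i : Fin (N f) ↦ f.1 i, f.1 (N f))) fun f g ⟨hinit, hlast⟩ m ↦ ?_⟩
  rcases lt_or_ge m (N f) with hm | hm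
  · have hsorted : (List.ofFn fun i : Fin (N g) ↦ g.1 i).SortedGE :=
      Antitone.sortedGE_ofFn fun _ _ h ↦ g.2 h
    obtain ⟨_, hle⟩ := getElem_le_getElem_of_sublistForall₂ hinit hsorted m (by simpa using hm)
    simpa only [List.getElem_ofFn] using hle
  · calc f.1 m ≤ f.1 (N f) := f.2 hm
      _ ≤ g.1 (N g) := hlast
      _ ≤ g.1 m := hN g m

end AntitoneSequences

section UpperSets

variable {α β : Type*} [Preorder α] [Preorder β]

/-- The slice `{b | (a, b) ∈ U}` of an upper set of a product order over a point of the first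
factor. -/
def upperSetSlice (U : UpperSet (α × β)) (a : α) : UpperSet β where
  carrier := Prod.mk a ⁻¹' U
  upper' := U.upper.preimage fun _ _ h ↦ Prod.mk_le_mk.2 ⟨le_rfl, h⟩

theorem antitone_upperSetSlice (U : UpperSet (α × β)) : Antitone (upperSetSlice U) :=
  fun _ _ h _ hb ↦ U.upper (Prod.mk_le_mk.2 ⟨h, le_rfl⟩) hb

theorem wellQuasiOrderedLE_upperSet_nat_prod [WellQuasiOrderedLE (UpperSet β)] :
    WellQuasiOrderedLE (UpperSet (ℕ × β)) := by
  have := wellQuasiOrderedLE_antitone_nat (Q := UpperSet β)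
  exact ⟨wellQuasiOrdered_of_reflects wellQuasiOrdered_le
    (fun U ↦ (⟨upperSetSlice U, antitone_upperSetSlice U⟩ : {f : ℕ → UpperSet β // Antitone f}))
    fun _ _ hslice x hx ↦ hslice x.1 hx⟩

/-- Maclagan's theorem. -/
theorem wellQuasiOrderedLE_upperSet_fin_nat (d : ℕ) :
    WellQuasiOrderedLE (UpperSet (Fin d → ℕ)) := by
  induction d with
  | zero => exact Finite.to_wellQuasiOrderedLE
  | succ d ih =>
    rw [← (UpperSet.map (Fin.consOrderIso fun _ ↦ ℕ)).wellQuasiOrderedLE_iff]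
    exact wellQuasiOrderedLE_upperSet_nat_prod

end UpperSets

section MonoidIdeals

variable {F M : Type*} [AddCommMonoid M]

/-- The preimage of a semigroup ideal under a homomorphism `φ` from an ordered monoid in which
`a ≤ b` implies `b = a + c` for some `c`, so that the preimage is an upper set. -/
def upperSetPreimage [AddZeroClass F] [LE F] [ExistsAddOfLE F] (φ : F →+ M)
    (I : AddSemigroupIdeal M) : UpperSet F where
  carrier := φ ⁻¹' I
  upper' a b hab ha := by
    obtain ⟨c, rfl⟩ := exists_add_of_le hab
    rw [Set.mem_preimage, map_add, add_comm]
    exact I.add_mem _ ha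

theorem wellQuasiOrderedLE_orderDual_addSemigroupIdeal [AddMonoid.FG M] :
    WellQuasiOrderedLE (AddSemigroupIdeal M)ᵒᵈ := by
  have := Module.Finite.iff_addMonoid_fg.2 ‹AddMonoid.FG M›
  obtain ⟨d, φ, hφ⟩ := Module.Finite.exists_fin' ℕ M
  have := wellQuasiOrderedLE_upperSet_fin_nat d
  refine ⟨wellQuasiOrdered_of_reflects wellQuasiOrdered_le
    (fun I ↦ upperSetPreimage φ.toAddMonoidHom (OrderDual.ofDual I)) fun I J hIJ ↦ ?_⟩
  exact (Set.preimage_subset_preimage_iff (by simp [hφ.range_eq])).1 hIJ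

end MonoidIdeals

theorem monomialIdeals_of_submonoid_no_infinite_antichain_general {A : Type*} [AddCommMonoid A]
    (M : AddSubmonoid A) (hfg : M.FG) (𝓣 : Set (Set A))
    (hideal : ∀ T ∈ 𝓣, T ⊆ (M : Set A) ∧ ∀ t ∈ T, ∀ m ∈ M, t + m ∈ T)
    (hinf : 𝓣.Infinite) :
    ∃ T₁ ∈ 𝓣, ∃ T₂ ∈ 𝓣, T₁ ≠ T₂ ∧ T₁ ⊆ T₂ := by
  have := (AddMonoid.fg_iff_addSubmonoid_fg M).2 hfg
  let toIdeal (T : 𝓣) : (AddSemigroupIdeal M)ᵒᵈ := OrderDual.toDual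
    { carrier := Subtype.val ⁻¹' T.1
      vadd_mem' := fun m t ht ↦ by
        rw [Set.mem_preimage, vadd_eq_add, add_comm]
        exact (hideal T T.2).2 t ht m m.2 }
  let T : ℕ ↪ 𝓣 := hinf.natEmbedding 𝓣
  obtain ⟨i, j, hij, hle⟩ := wellQuasiOrderedLE_orderDual_addSemigroupIdeal.wqo (toIdeal ∘ T)
  refine ⟨T j, (T j).2, T i, (T i).2, ?_, fun x hx ↦ ?_⟩
  · exact fun heq ↦ hij.ne' (T.injective (Subtype.ext heq))
  · have hxM : x ∈ M := (hideal (T j) (T j).2).1 hx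
    exact @hle ⟨x, hxM⟩ hx

/-- **Antichains of monomial ideals of an affine semigroup are finite.**  Let `M` be a
finitely generated submonoid of `ℕⁿ`.  A *monomial ideal* of `M` is a subset
`T ⊆ M` with `T + M ⊆ T`.  Then any infinite collection of monomial ideals of `M`
contains two distinct members `T₁ ⊆ T₂`. -/
theorem monomialIdeals_of_submonoid_no_infinite_antichain {n : ℕ}
    (M : AddSubmonoid (Fin n → ℕ)) (hfg : M.FG)
    (𝓣 : Set (Set (Fin n → ℕ)))
    (hideal : ∀ T ∈ 𝓣, T ⊆ (M : Set (Fin n → ℕ)) ∧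
      ∀ t ∈ T, ∀ m ∈ M, t + m ∈ T)
    (hinf : 𝓣.Infinite) :
    ∃ T₁ ∈ 𝓣, ∃ T₂ ∈ 𝓣, T₁ ≠ T₂ ∧ T₁ ⊆ T₂ := by
  exact monomialIdeals_of_submonoid_no_infinite_antichain_general M hfg 𝓣 hideal hinf
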